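/- Let u ∈ ℝ⁴ be a future timelike vector, p₀ ∈ ℝ⁴, and ℓ = {p₀ + s u : s ∈ ℝ}. Let G_M be the group of affine bijections f of ℝ⁴ of the form f(x) = B x + b with B a Lorentz transformation (not necessarily proper or orthochronous, so in particular time inversion is allowed) and b ∈ ℝ⁴, such that f(ℓ) = ℓ. If ∼ is a G_M-invariant equivalence relation on ℝ⁴ such that every equivalence class meets ℓ in exactly one point, then ∼ equals the standard simultaneity relation R_u: x ∼ y ⟺ g_c(x − y, u) = 0. -/

import Mathlib

noncomputable section

/-- Spacetime `ℝ⁴`, identified with `ℝ³ × ℝ`. -/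
abbrev V4 : Type := (Fin 3 → ℝ) × ℝ

/-- The Minkowski form `g_c(x, y) = x̄ ⬝ ȳ - c² x⁴ y⁴`. -/
def mink (c : ℝ) (x y : V4) : ℝ := (∑ i, x.1 i * y.1 i) - c ^ 2 * x.2 * y.2

/-- A vector is future timelike if `g_c(u, u) < 0` and `u⁴ > 0`. -/
def FutureTimelike (c : ℝ) (u : V4) : Prop := mink c u u < 0 ∧ 0 < u.2

/-- A linear map is a Lorentz transformation if it preserves the Minkowski form. -/
def IsLorentz (c : ℝ) (B : V4 →ₗ[ℝ] V4) : Prop :=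
  ∀ x y : V4, mink c (B x) (B y) = mink c x y

/-- The standard simultaneity relation determined by a future timelike vector `u`:
`x R_u y ↔ g_c(x - y, u) = 0`. -/
def Rstd (c : ℝ) (u : V4) (x y : V4) : Prop := mink c (x - y) u = 0

/-- The inertial worldline through `p₀` with direction `u`. -/
def line (p₀ u : V4) : Set V4 := {x : V4 | ∃ s : ℝ, x = p₀ + s • u}

/-!
For a point `x` and its orthogonal projection `o` to `ℓ`, the time inversion about `o`, that is, the
reflection in the hyperplane through `o` orthogonal to `u`, is an element of `G_M` that fixes `x`
and restricts to `ℓ` as the point reflection in `o`. By invariance it fixes the unique point of `ℓ`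
equivalent to `x`, which is therefore `o`. So `x ∼ y` exactly when `x` and `y` have the same
projection.
-/

section Rel

variable {X : Type*} {r : X → X → Prop} {L : Set X}

theorem rel_of_unique_fixed_point {σ : X → X} {x o : X} (hrep : ∃! p, p ∈ L ∧ r x p)
    (hσ : ∀ p q, r p q → r (σ p) (σ q)) (hσL : Set.MapsTo σ L L) (hx : σ x = x)
    (ho : ∀ p ∈ L, σ p = p → p = o) : r x o := by
  obtain ⟨p, ⟨hpL, hxp⟩, hunique⟩ := hrep
  have hxσp : r x (σ p) := by simpa only [hx] using hσ x p hxp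
  have hpo : p = o := ho p hpL (hunique (σ p) ⟨hσL hpL, hxσp⟩)
  exact hpo ▸ hxp

theorem rel_iff_eq_of_forall_rel (hr : Equivalence r) (hrep : ∀ x, ∃! p, p ∈ L ∧ r x p)
    {π : X → X} (hπL : ∀ x, π x ∈ L) (hπ : ∀ x, r x (π x)) {x y : X} :
    r x y ↔ π x = π y := by
  constructor
  · intro hxy
    exact (hrep x).unique ⟨hπL x, hπ x⟩ ⟨hπL y, hr.trans hxy (hπ y)⟩
  · intro hxy
    exact hr.trans (hxy ▸ hπ x) (hr.symm (hπ y))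

end Rel

section TimeInversion

open Module

variable {R V P : Type*} [CommRing R] [AddCommGroup V] [Module R V] [AddTorsor V P]
  {f : Dual R V} {u : V}

/-- The time inversion about the event `o` along `u`: when `f u = 2`, it is the affine map that
fixes the hyperplane of events `p` with `f (p -ᵥ o) = 0` and whose linear part
`Module.reflection` sends `u` to `-u`. The normalization of `f` is that of
`LinearMap.IsReflective.coroot`. -/
def timeInversion (f : Dual R V) (u : V) (o p : P) : P := -(f (p -ᵥ o) • u) +ᵥ p

/-- The projection of the event `p` along `ker f` to the line through `p₀` with direction `u`,
when `f u = 2`. -/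
def lineProjection [Invertible (2 : R)] (f : Dual R V) (u : V) (p₀ p : P) : P :=
  (⅟2 * f (p -ᵥ p₀)) • u +ᵥ p₀

theorem timeInversion_eq_reflection_add (hf : f u = 2) (o v : V) :
    timeInversion f u o v = reflection hf v + f o • u := by
  simp only [timeInversion, vsub_eq_sub, vadd_eq_add, reflection_apply, map_sub]
  module

theorem involutive_timeInversion (hf : f u = 2) (o : P) :
    Function.Involutive (timeInversion f u o) := by
  intro p
  have hneg : f (timeInversion f u o p -ᵥ o) = -f (p -ᵥ o) := by
    simp only [timeInversion, vadd_vsub_assoc, map_add, map_neg, map_smul, hf, smul_eq_mul]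
    ring
  rw [timeInversion, hneg, timeInversion, vadd_vadd, neg_smul, neg_neg, add_neg_cancel, zero_vadd]

theorem mapsTo_timeInversion {L : AffineSubspace R P} (hu : u ∈ L.direction) (o : P) :
    Set.MapsTo (timeInversion f u o) L L := fun _ hp ↦
  AffineSubspace.vadd_mem_of_mem_direction (neg_mem (L.direction.smul_mem _ hu)) hp

theorem timeInversion_image_eq (hf : f u = 2) {L : AffineSubspace R P} (hu : u ∈ L.direction)
    (o : P) : timeInversion f u o '' L = L := by
  have hinvol := involutive_timeInversion hf o
  refine (mapsTo_timeInversion hu o).image_subset.antisymm ?_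
  rw [hinvol.image_eq_preimage_symm]
  exact mapsTo_timeInversion hu o

theorem mem_direction_mk'_span_singleton (p₀ : P) :
    u ∈ (AffineSubspace.mk' p₀ (R ∙ u)).direction := by
  rw [AffineSubspace.direction_mk']
  exact Submodule.mem_span_singleton_self u

variable [Invertible (2 : R)]

theorem timeInversion_eq_self_iff (hf : f u = 2) {o p : P} :
    timeInversion f u o p = p ↔ f (p -ᵥ o) = 0 := by
  rw [timeInversion, eq_comm, eq_vadd_iff_vsub_eq, vsub_self, zero_eq_neg]
  refine ⟨fun h ↦ ?_, fun h ↦ by rw [h, zero_smul]⟩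
  have hmul : f (p -ᵥ o) * 2 = 0 := by
    rw [← hf, ← smul_eq_mul, ← map_smul, h, map_zero]
  exact (isUnit_of_invertible (2 : R)).mul_left_eq_zero.mp hmul

theorem eq_of_mem_mk'_of_apply_vsub_eq_zero (hf : f u = 2) {p₀ p q : P}
    (hp : p ∈ AffineSubspace.mk' p₀ (R ∙ u)) (hq : q ∈ AffineSubspace.mk' p₀ (R ∙ u))
    (h : f (p -ᵥ q) = 0) : p = q := by
  have hpq : p -ᵥ q ∈ R ∙ u := by
    simpa only [AffineSubspace.direction_mk'] using AffineSubspace.vsub_mem_direction hp hq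
  obtain ⟨t, ht⟩ := Submodule.mem_span_singleton.mp hpq
  have htwo : t * 2 = 0 := by rw [← hf, ← smul_eq_mul, ← map_smul, ht, h]
  have ht0 : t = 0 := (isUnit_of_invertible (2 : R)).mul_left_eq_zero.mp htwo
  rw [← vsub_eq_zero_iff_eq, ← ht, ht0, zero_smul]

theorem lineProjection_mem_mk' (p₀ p : P) :
    lineProjection f u p₀ p ∈ AffineSubspace.mk' p₀ (R ∙ u) :=
  AffineSubspace.vadd_mem_mk' p₀ (Submodule.smul_mem _ _ (Submodule.mem_span_singleton_self u))

theorem apply_vsub_lineProjection (hf : f u = 2) (p₀ p : P) :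
    f (p -ᵥ lineProjection f u p₀ p) = 0 := by
  rw [lineProjection, vsub_vadd_eq_vsub_sub, map_sub, map_smul, hf, smul_eq_mul, mul_right_comm,
    invOf_mul_self, one_mul, sub_self]

theorem lineProjection_eq_iff (hf : f u = 2) {p₀ p q : P} :
    lineProjection f u p₀ p = lineProjection f u p₀ q ↔ f (p -ᵥ q) = 0 := by
  set p' := lineProjection f u p₀ p
  set q' := lineProjection f u p₀ q
  have hpq : f (p -ᵥ q) = f (p' -ᵥ q') := calc
    f (p -ᵥ q) = f (p -ᵥ p') + f (p' -ᵥ q') - f (q -ᵥ q') := by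
      rw [← map_add, ← map_sub, vsub_add_vsub_cancel, vsub_sub_vsub_cancel_right]
    _ = f (p' -ᵥ q') := by
      rw [apply_vsub_lineProjection hf, apply_vsub_lineProjection hf, zero_add, sub_zero]
  rw [hpq]
  refine ⟨fun h ↦ by rw [h, vsub_self, map_zero], ?_⟩
  exact eq_of_mem_mk'_of_apply_vsub_eq_zero hf (lineProjection_mem_mk' p₀ p)
    (lineProjection_mem_mk' p₀ q)

/-- For `f` the coroot of `u` with respect to a form `B`,
`f v = 0` says that `B u v = 0`. -/
theorem hogarth_theorem_general (hf : f u = 2) (p₀ : P) {r : P → P → Prop} (hr : Equivalence r)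
    (hinv : ∀ o ∈ AffineSubspace.mk' p₀ (R ∙ u), ∀ p q, r p q →
      r (timeInversion f u o p) (timeInversion f u o q))
    (hrep : ∀ p, ∃! q, q ∈ AffineSubspace.mk' p₀ (R ∙ u) ∧ r p q) (p q : P) :
    r p q ↔ f (p -ᵥ q) = 0 := by
  have rel_lineProjection (x : P) : r x (lineProjection f u p₀ x) := by
    have hmem := lineProjection_mem_mk' (f := f) (u := u) p₀ x
    refine rel_of_unique_fixed_point (hrep x) (hinv _ hmem)
      (mapsTo_timeInversion (mem_direction_mk'_span_singleton p₀) _) ?_ fun y hy hfix ↦ ?_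
    · exact (timeInversion_eq_self_iff hf).mpr (apply_vsub_lineProjection hf p₀ x)
    · exact eq_of_mem_mk'_of_apply_vsub_eq_zero hf hy hmem ((timeInversion_eq_self_iff hf).mp hfix)
  rw [rel_iff_eq_of_forall_rel hr hrep (lineProjection_mem_mk' p₀) rel_lineProjection,
    lineProjection_eq_iff hf]

end TimeInversion

section Reflective

variable {R K V : Type*} [AddCommGroup V]

theorem isReflective_of_apply_self_ne_zero [Field K] [Module K V] {B : LinearMap.BilinForm K V}
    {u : V} (hu : B u u ≠ 0) : B.IsReflective u :=
  ⟨.of_ne_zero hu, fun _ ↦ hu.isUnit.dvd⟩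

theorem coroot_apply_eq_zero_iff [CommRing R] [Invertible (2 : R)] [Module R V]
    {B : LinearMap.BilinForm R V} {u : V} (hu : B.IsReflective u) {v : V} :
    hu.coroot B v = 0 ↔ B u v = 0 := by
  rw [← hu.regular.left.mul_left_eq_zero_iff, hu.apply_self_mul_coroot_apply,
    (isUnit_of_invertible (2 : R)).mul_right_eq_zero]

theorem rel_timeInversion_of_isOrthogonal_invariant [CommRing R] [Module R V]
    {B : LinearMap.BilinForm R V} (hB : LinearMap.IsSymm B) {u : V} (hu : B.IsReflective u)
    {L : AffineSubspace R V} (huL : u ∈ L.direction) {r : V → V → Prop}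
    (hinv : ∀ T : V →ₗ[R] V, B.IsOrthogonal T → ∀ b : V, (fun x ↦ T x + b) '' L = L →
      ∀ p q, r p q → r (T p + b) (T q + b))
    (o : V) {p q : V} (hpq : r p q) :
    r (timeInversion (hu.coroot B) u o p) (timeInversion (hu.coroot B) u o q) := by
  have hcoroot := hu.coroot_apply_self B
  have himage := timeInversion_image_eq hcoroot huL o
  rw [funext (timeInversion_eq_reflection_add hcoroot o)] at himage
  rw [timeInversion_eq_reflection_add hcoroot, timeInversion_eq_reflection_add hcoroot]
  exact hinv _ (hu.isOrthogonal_reflection B hB) _ himage p q hpq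

end Reflective

section Minkowski

theorem mink_comm (c : ℝ) (x y : V4) : mink c x y = mink c y x := by
  simp only [mink, mul_comm, mul_left_comm]

theorem mink_add_left (c : ℝ) (x y z : V4) : mink c (x + y) z = mink c x z + mink c y z := by
  simp only [mink, Prod.fst_add, Prod.snd_add, Pi.add_apply, add_mul, Finset.sum_add_distrib]
  ring

theorem mink_smul_left (c a : ℝ) (x y : V4) : mink c (a • x) y = a * mink c x y := by
  simp only [mink, Prod.smul_fst, Prod.smul_snd, Pi.smul_apply, smul_eq_mul, mul_assoc,
    ← Finset.mul_sum]
  ring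

/-- The Minkowski form `mink c` as a bilinear form. -/
def minkForm (c : ℝ) : LinearMap.BilinForm ℝ V4 :=
  LinearMap.mk₂ ℝ (mink c) (mink_add_left c) (mink_smul_left c)
    (fun x y z ↦ by simp only [mink_comm c x, mink_add_left])
    (fun a x y ↦ by simp only [mink_comm c x, mink_smul_left, smul_eq_mul])

theorem isSymm_minkForm (c : ℝ) : LinearMap.IsSymm (minkForm c) :=
  ⟨mink_comm c⟩

theorem coe_mk'_span_singleton_eq_line (p₀ u : V4) :
    (AffineSubspace.mk' p₀ (ℝ ∙ u) : Set V4) = line p₀ u := by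
  ext x
  simp only [SetLike.mem_coe, AffineSubspace.mem_mk', Submodule.mem_span_singleton, line,
    Set.mem_ofPred_eq, vsub_eq_sub, eq_sub_iff_add_eq', eq_comm]

theorem Rstd_iff_coroot_apply_eq_zero {c : ℝ} {u : V4} (hu : (minkForm c).IsReflective u)
    (x y : V4) : Rstd c u x y ↔ hu.coroot (minkForm c) (x - y) = 0 := by
  rw [coroot_apply_eq_zero_iff, Rstd, mink_comm]
  rfl

end Minkowski

/-- Hogarth's variant of Malament's theorem: let `G_M` be the group of affine
bijections `x ↦ B x + b` (`B` any Lorentz transformation — time inversion allowed,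
no dilatations) preserving the line `ℓ = p₀ + ℝu`.  Any `G_M`-invariant equivalence
relation each of whose classes meets `ℓ` in exactly one point is the standard
simultaneity `R_u`. -/
theorem hogarth_theorem (c : ℝ) (hc : 0 < c) (u : V4) (hu : FutureTimelike c u)
    (p₀ : V4) (r : V4 → V4 → Prop) (hr : Equivalence r)
    (hinv : ∀ B : V4 →ₗ[ℝ] V4, IsLorentz c B → ∀ b : V4,
      (fun x : V4 => B x + b) '' line p₀ u = line p₀ u →
      ∀ p q : V4, r p q → r (B p + b) (B q + b))
    (hrep : ∀ x : V4, ∃! p : V4, p ∈ line p₀ u ∧ r x p) :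
    ∀ x y : V4, r x y ↔ Rstd c u x y := by
  intro x y
  have hrefl : (minkForm c).IsReflective u := isReflective_of_apply_self_ne_zero hu.1.ne
  simp only [← coe_mk'_span_singleton_eq_line] at hinv hrep
  rw [Rstd_iff_coroot_apply_eq_zero hrefl]
  exact hogarth_theorem_general (hrefl.coroot_apply_self _) p₀ hr
    (fun o _ _ _ ↦ rel_timeInversion_of_isOrthogonal_invariant (isSymm_minkForm c) hrefl
      (mem_direction_mk'_span_singleton p₀) hinv o) hrep x y
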